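/- Let μ, ν be Borel probability measures on ℝ with finite first moments and μ ≤_cd ν. For every u ∈ (0,1), if S_u is a shadow of μ_u in ν, then c(u) = ∫ x μ_u(dx) − ∫ x S_u(dx), where c(u) = sup_{k∈ℝ} (C_{μ_u}(k) − C_ν(k)). -/

import Mathlib

open MeasureTheory Set Filter

noncomputable section

/-- `η ∈ 𝓜`: a finite Borel measure on ℝ with finite first moment. -/
def MemM (η : MeasureTheory.Measure ℝ) : Prop :=
  MeasureTheory.IsFiniteMeasure η ∧ MeasureTheory.Integrable (fun x : ℝ => x) η

/-- Convex-decreasing order `≤_cd`. -/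
def LeCD (η χ : MeasureTheory.Measure ℝ) : Prop :=
  ∀ f : ℝ → ℝ, ConvexOn ℝ Set.univ f → Antitone f →
    MeasureTheory.Integrable f η → MeasureTheory.Integrable f χ →
    ∫ x, f x ∂η ≤ ∫ x, f x ∂χ

/-- Positive convex-decreasing order `≤_pcd`. -/
def LePCD (η χ : MeasureTheory.Measure ℝ) : Prop :=
  ∀ f : ℝ → ℝ, (∀ x, 0 ≤ f x) → ConvexOn ℝ Set.univ f → Antitone f →
    MeasureTheory.Integrable f η → MeasureTheory.Integrable f χ →
    ∫ x, f x ∂η ≤ ∫ x, f x ∂χ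

/-- Positive convex order `≤_pc`. -/
def LePC (η χ : MeasureTheory.Measure ℝ) : Prop :=
  ∀ f : ℝ → ℝ, (∀ x, 0 ≤ f x) → ConvexOn ℝ Set.univ f →
    MeasureTheory.Integrable f η → MeasureTheory.Integrable f χ →
    ∫ x, f x ∂η ≤ ∫ x, f x ∂χ

/-- A supermartingale coupling of `η` and `χ`. -/
def IsSupermartingaleCoupling (η χ : MeasureTheory.Measure ℝ)
    (π : MeasureTheory.Measure (ℝ × ℝ)) : Prop :=
  MeasureTheory.IsProbabilityMeasure π ∧
  π.map Prod.fst = η ∧ π.map Prod.snd = χ ∧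
  MeasureTheory.Integrable (fun p : ℝ × ℝ => p.2) π ∧
  ∀ B : Set ℝ, MeasurableSet B →
    ∫ p in B ×ˢ (Set.univ : Set ℝ), (p : ℝ × ℝ).2 ∂π ≤ ∫ x in B, x ∂η

/-- The potential function `P_η(k) = ∫ (k-x)⁺ η(dx)`. -/
def Ppot (η : MeasureTheory.Measure ℝ) (k : ℝ) : ℝ := ∫ x, max (k - x) 0 ∂η

/-- The potential function `C_η(k) = ∫ (x-k)⁺ η(dx)`. -/
def Cpot (η : MeasureTheory.Measure ℝ) (k : ℝ) : ℝ := ∫ x, max (x - k) 0 ∂η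

/-- The left-continuous quantile function `G_η(u) = sup {k | η((-∞,k]) < u}`. -/
def quantile (η : MeasureTheory.Measure ℝ) (u : ℝ) : ℝ :=
  sSup {k : ℝ | (η (Set.Iic k)).toReal < u}

/-- The lift `μ_u = μ|_{(-∞,G(u))} + (u - μ((-∞,G(u)))) δ_{G(u)}`, with `μ_0 = 0`, `μ_1 = μ`. -/
def muU (μ : MeasureTheory.Measure ℝ) (u : ℝ) : MeasureTheory.Measure ℝ :=
  if u ≤ 0 then 0
  else if 1 ≤ u then μ
  else μ.restrict (Set.Iio (quantile μ u)) +
    (ENNReal.ofReal (u - (μ (Set.Iio (quantile μ u))).toReal)) •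
      MeasureTheory.Measure.dirac (quantile μ u)

/-- `S` is a shadow of `μ` in `ν`. -/
def IsShadow (μ ν S : MeasureTheory.Measure ℝ) : Prop :=
  MemM S ∧ LeCD μ S ∧ (∀ A : Set ℝ, MeasurableSet A → S A ≤ ν A) ∧
  ∀ η : MeasureTheory.Measure ℝ, MemM η → LeCD μ η →
    (∀ A : Set ℝ, MeasurableSet A → η A ≤ ν A) → LeCD S η

/-- `h` is the convex hull of `f`. -/
def IsConvexHullFn (f h : ℝ → ℝ) : Prop :=
  ConvexOn ℝ Set.univ h ∧ (∀ x, h x ≤ f x) ∧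
  ∀ g : ℝ → ℝ, ConvexOn ℝ Set.univ g → (∀ x, g x ≤ f x) → ∀ x, g x ≤ h x

/-- The class `𝒟(a,b)`. -/
def MemD (a b : ℝ) (f : ℝ → ℝ) : Prop :=
  (∀ x, 0 ≤ f x) ∧ Monotone f ∧ ConvexOn ℝ Set.univ f ∧
  Filter.Tendsto f Filter.atBot (nhds 0) ∧
  Filter.Tendsto (fun z => f z - (a * z - b)) Filter.atTop (nhds 0)

/-- The topological support of a measure. -/
def msupport (η : MeasureTheory.Measure ℝ) : Set ℝ :=
  {x : ℝ | ∀ U ∈ nhds x, η U ≠ 0}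

open scoped ENNReal NNReal Topology

lemma MemM.integrable_put {η : Measure ℝ} (hη : MemM η) (k : ℝ) :
    Integrable (fun x => max (k - x) 0) η := by
  have := hη.1
  exact ((integrable_const k).sub hη.2).pos_part

lemma MemM.integrable_call {η : Measure ℝ} (hη : MemM η) (k : ℝ) :
    Integrable (fun x => max (x - k) 0) η := by
  have := hη.1
  exact (hη.2.sub (integrable_const k)).pos_part

/-- The measure on `ℝ` whose density is the (left-continuous) distribution function of `η`. -/
def cdfMeasure (η : Measure ℝ) : Measure ℝ :=
  volume.withDensity fun s => η (Iio s)

lemma measurable_measure_Iio (η : Measure ℝ) : Measurable fun s : ℝ => η (Iio s) :=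
  Monotone.measurable fun _ _ h => measure_mono (Iio_subset_Iio h)

lemma lintegral_lintegral_Ioi (η : Measure ℝ) [IsFiniteMeasure η] {ψ : ℝ → ℝ≥0∞}
    (hψ : Measurable ψ) (N : ℝ) :
    ∫⁻ x, (∫⁻ s in Iio N, (Ioi x).indicator ψ s) ∂η =
      ∫⁻ s in Iio N, ψ s ∂(cdfMeasure η) := by
  have hset : MeasurableSet {p : ℝ × ℝ | p.1 < p.2} := measurableSet_lt measurable_fst measurable_snd
  rw [lintegral_lintegral_swap]
  · rw [cdfMeasure, restrict_withDensity measurableSet_Iio,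
      lintegral_withDensity_eq_lintegral_mul _ (measurable_measure_Iio η) hψ]
    apply lintegral_congr
    intro s
    have : (fun x => (Ioi x).indicator ψ s) = (Iio s).indicator fun _ => ψ s := by
      ext x; simp [indicator]
    rw [this, lintegral_indicator_const measurableSet_Iio, Pi.mul_apply, mul_comm]
  · have : (Function.uncurry fun x s => (Ioi x).indicator ψ s) =
        {p : ℝ × ℝ | p.1 < p.2}.indicator fun p => ψ p.2 := by
      ext ⟨x, s⟩; simp [indicator, Function.uncurry]
    rw [this]
    exact ((hψ.comp measurable_snd).indicator hset).aemeasurable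

lemma cdfMeasure_Iio {η : Measure ℝ} (hη : MemM η) (k : ℝ) :
    cdfMeasure η (Iio k) = ENNReal.ofReal (Ppot η k) := by
  have := hη.1
  have h := lintegral_lintegral_Ioi η (ψ := fun _ => 1) measurable_const k
  rw [setLIntegral_const, one_mul] at h
  rw [← h, Ppot, ofReal_integral_eq_lintegral_ofReal (hη.integrable_put k)
    (Eventually.of_forall fun x => le_max_right _ _)]
  apply lintegral_congr
  intro x
  rw [lintegral_indicator_const measurableSet_Ioi, one_mul,
    Measure.restrict_apply measurableSet_Ioi, Ioi_inter_Iio, Real.volume_Ioo]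
  simp [ENNReal.ofReal_max]

lemma cdfMeasure_le_of_isLowerSet {η χ : Measure ℝ} (hη : MemM η) (hχ : MemM χ)
    (h : ∀ k, Ppot η k ≤ Ppot χ k) {L : Set ℝ} (hL : IsLowerSet L) (hb : BddAbove L) :
    cdfMeasure η L ≤ cdfMeasure χ L := by
  rcases L.eq_empty_or_nonempty with rfl | hne
  · simp
  have h1 : L ⊆ Iic (sSup L) := fun x hx => le_csSup hb hx
  have h2 : Iio (sSup L) ⊆ L := fun x hx => by
    obtain ⟨y, hy, hxy⟩ := exists_lt_of_lt_csSup hne hx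
    exact hL hxy.le hy
  have h3 : cdfMeasure η (Iic (sSup L)) = cdfMeasure η (Iio (sSup L)) :=
    measure_congr ((withDensity_absolutelyContinuous _ _).ae_le Iio_ae_eq_Iic.symm)
  calc cdfMeasure η L ≤ cdfMeasure η (Iic (sSup L)) := measure_mono h1
    _ = ENNReal.ofReal (Ppot η (sSup L)) := by rw [h3, cdfMeasure_Iio hη]
    _ ≤ ENNReal.ofReal (Ppot χ (sSup L)) := ENNReal.ofReal_le_ofReal (h _)
    _ = cdfMeasure χ (Iio (sSup L)) := (cdfMeasure_Iio hχ _).symm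
    _ ≤ cdfMeasure χ L := measure_mono h2

lemma lintegral_cdfMeasure_mono {η χ : Measure ℝ} (hη : MemM η) (hχ : MemM χ)
    (h : ∀ k, Ppot η k ≤ Ppot χ k) {ψ : ℝ → ℝ} (hψ : Antitone ψ) (hψ0 : ∀ s, 0 ≤ ψ s) (N : ℝ) :
    ∫⁻ s in Iio N, ENNReal.ofReal (ψ s) ∂(cdfMeasure η) ≤
      ∫⁻ s in Iio N, ENNReal.ofReal (ψ s) ∂(cdfMeasure χ) := by
  rw [lintegral_eq_lintegral_meas_lt _ (Eventually.of_forall hψ0) hψ.measurable.aemeasurable,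
    lintegral_eq_lintegral_meas_lt _ (Eventually.of_forall hψ0) hψ.measurable.aemeasurable]
  refine lintegral_mono fun t => ?_
  have hm : MeasurableSet {a | t < ψ a} := measurableSet_lt measurable_const hψ.measurable
  rw [Measure.restrict_apply hm, Measure.restrict_apply hm]
  refine cdfMeasure_le_of_isLowerSet hη hχ h (fun a b hba ha => ?_)
    ⟨N, fun a ha => le_of_lt ha.2⟩
  exact ⟨lt_of_lt_of_le ha.1 (hψ hba), lt_of_le_of_lt hba ha.2⟩

lemma ConvexOn.ofReal_sub_eq_lintegral {f : ℝ → ℝ} (hf : ConvexOn ℝ univ f) (hanti : Antitone f)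
    (N x : ℝ) :
    ENNReal.ofReal (f (min x N) - f N) = ∫⁻ s in Iio N,
      (Ioi x).indicator (fun s => ENNReal.ofReal (-derivWithin f (Ioi s) s)) s := by
  have hmono : Monotone fun s => derivWithin f (Ioi s) s := fun a b hab =>
    hf.monotoneOn_rightDeriv (by simp) (by simp) hab
  have hnonpos : ∀ s, derivWithin f (Ioi s) s ≤ 0 := fun s => (hanti.antitoneOn _).derivWithin_nonpos
  rw [lintegral_indicator measurableSet_Ioi, Measure.restrict_restrict measurableSet_Ioi,
    Ioi_inter_Iio]
  rcases le_total N x with hx | hx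
  · simp [hx]
  have hi : IntervalIntegrable (fun s => derivWithin f (Ioi s) s) volume x N :=
    hmono.intervalIntegrable
  have key := intervalIntegral.integral_eq_sub_of_hasDeriv_right_of_le hx
    ((hf.continuousOn isOpen_univ).mono (subset_univ _))
    (fun s _ => hf.hasDerivWithinAt_rightDeriv_of_mem_interior (by simp)) hi
  rw [intervalIntegral.integral_of_le hx, integral_Ioc_eq_integral_Ioo] at key
  rw [min_eq_left hx, ← neg_sub, ← key, ← integral_neg, ofReal_integral_eq_lintegral_ofReal]
  · exact (((intervalIntegrable_iff_integrableOn_Ioo_of_le hx).1 hi)).neg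
  · exact Eventually.of_forall fun s => neg_nonneg.2 (hnonpos s)

/-- Measures of equal mass with ordered put potentials are in convex-decreasing order. -/
lemma leCD_of_Ppot_le {η χ : Measure ℝ} (hη : MemM η) (hχ : MemM χ)
    (hmass : η.real univ = χ.real univ) (h : ∀ k, Ppot η k ≤ Ppot χ k) : LeCD η χ := by
  intro f hf hanti hfη hfχ
  have := hη.1
  have := hχ.1
  have hcont : Continuous f := continuousOn_univ.1 (hf.continuousOn isOpen_univ)
  have hbound : ∀ N : ℝ, 0 ≤ N → ∀ x, ‖f (min x N)‖ ≤ |f x| + |f 0| := by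
    intro N hN x
    have h1 : f x ≤ f (min x N) := hanti (min_le_left _ _)
    rw [Real.norm_eq_abs]
    rcases le_total x N with hx | hx
    · rw [min_eq_left hx]; linarith [abs_nonneg (f 0)]
    · rw [min_eq_right hx] at h1 ⊢
      have h2 : f N ≤ f 0 := hanti hN
      exact abs_le.2 ⟨by linarith [neg_abs_le (f x), abs_nonneg (f 0)],
        by linarith [le_abs_self (f 0), abs_nonneg (f x)]⟩
  have hmeas : ∀ N : ℝ, Continuous fun x => f (min x N) := fun N =>
    hcont.comp (continuous_id.min continuous_const)
  have hint : ∀ {ξ : Measure ℝ} [IsFiniteMeasure ξ], Integrable f ξ → ∀ N : ℝ, 0 ≤ N →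
      Integrable (fun x => f (min x N)) ξ := fun hfξ N hN =>
    (hfξ.abs.add (integrable_const |f 0|)).mono' (hmeas N).aestronglyMeasurable
      (Eventually.of_forall (hbound N hN))
  have hlim : ∀ {ξ : Measure ℝ} [IsFiniteMeasure ξ], Integrable f ξ →
      Tendsto (fun N : ℝ => ∫ x, f (min x N) ∂ξ) atTop (𝓝 (∫ x, f x ∂ξ)) := fun hfξ =>
    tendsto_integral_filter_of_dominated_convergence (fun x => |f x| + |f 0|)
      (Eventually.of_forall fun N => (hmeas N).aestronglyMeasurable)
      ((eventually_ge_atTop 0).mono fun N hN => Eventually.of_forall (hbound N hN))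
      (hfξ.abs.add (integrable_const |f 0|))
      (Eventually.of_forall fun x => tendsto_const_nhds.congr' <|
        (eventually_ge_atTop x).mono fun N hN => by simp only [min_eq_left hN])
  refine le_of_tendsto_of_tendsto (hlim hfη) (hlim hfχ) ((eventually_ge_atTop 0).mono fun N hN => ?_)
  have hpos : ∀ x, 0 ≤ f (min x N) - f N := fun x => sub_nonneg.2 (hanti (min_le_right _ _))
  have hmono : Monotone fun s => derivWithin f (Ioi s) s := fun a b hab =>
    hf.monotoneOn_rightDeriv (by simp) (by simp) hab
  have key : ∫ x, (f (min x N) - f N) ∂η ≤ ∫ x, (f (min x N) - f N) ∂χ := by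
    have hη' : Integrable (fun x => f (min x N) - f N) η :=
      (hint hfη N hN).sub (integrable_const (f N))
    have hχ' : Integrable (fun x => f (min x N) - f N) χ :=
      (hint hfχ N hN).sub (integrable_const (f N))
    rw [← ENNReal.ofReal_le_ofReal_iff (integral_nonneg hpos),
      ofReal_integral_eq_lintegral_ofReal hη' (Eventually.of_forall hpos),
      ofReal_integral_eq_lintegral_ofReal hχ' (Eventually.of_forall hpos)]
    simp_rw [hf.ofReal_sub_eq_lintegral hanti N]
    have hm : Measurable fun s => ENNReal.ofReal (-derivWithin f (Ioi s) s) :=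
      hmono.measurable.neg.ennreal_ofReal
    rw [lintegral_lintegral_Ioi η hm, lintegral_lintegral_Ioi χ hm]
    exact lintegral_cdfMeasure_mono hη hχ h hmono.neg
      (fun s => neg_nonneg.2 (hanti.antitoneOn _).derivWithin_nonpos) N
  rw [integral_sub (hint hfη N hN) (integrable_const _),
    integral_sub (hint hfχ N hN) (integrable_const _), integral_const, integral_const, hmass] at key
  linarith

lemma Cpot_eq {η : Measure ℝ} (hη : MemM η) (k : ℝ) :
    Cpot η k = Ppot η k + ∫ x, x ∂η - k * η.real univ := by
  have := hη.1
  have h : ∫ x, (max (x - k) 0 - max (k - x) 0) ∂η = ∫ x, (x - k) ∂η := by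
    congr with x
    rcases le_total x k with hx | hx
    · rw [max_eq_right (by linarith), max_eq_left (by linarith)]; ring
    · rw [max_eq_left (by linarith), max_eq_right (by linarith)]; ring
  rw [integral_sub (hη.integrable_call k) (hη.integrable_put k),
    integral_sub hη.2 (integrable_const _), integral_const, smul_eq_mul] at h
  simp only [Cpot, Ppot]
  linarith

lemma Cpot_add {η χ : Measure ℝ} (hη : MemM η) (hχ : MemM χ) (k : ℝ) :
    Cpot (η + χ) k = Cpot η k + Cpot χ k :=
  integral_add_measure (hη.integrable_call k) (hχ.integrable_call k)

lemma Ppot_nonneg (η : Measure ℝ) (k : ℝ) : 0 ≤ Ppot η k :=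
  integral_nonneg fun _ => le_max_right _ _

lemma Cpot_nonneg (η : Measure ℝ) (k : ℝ) : 0 ≤ Cpot η k :=
  integral_nonneg fun _ => le_max_right _ _

lemma tendsto_Cpot_atTop {η : Measure ℝ} (hη : MemM η) : Tendsto (Cpot η) atTop (𝓝 0) := by
  have h : Tendsto (fun k => ∫ x, max (x - k) 0 ∂η) atTop (𝓝 (∫ _, (0 : ℝ) ∂η)) := by
    refine tendsto_integral_filter_of_dominated_convergence (fun x => |x|)
      (Eventually.of_forall fun k => (hη.integrable_call k).aestronglyMeasurable)
      ((eventually_ge_atTop 0).mono fun k hk => Eventually.of_forall fun x => ?_) hη.2.abs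
      (Eventually.of_forall fun x => tendsto_const_nhds.congr' <|
        (eventually_ge_atTop x).mono fun k hk => (max_eq_right (sub_nonpos.2 hk)).symm)
    rw [Real.norm_eq_abs, abs_of_nonneg (le_max_right _ _)]
    exact max_le (by linarith [le_abs_self x]) (abs_nonneg x)
  rwa [integral_zero] at h

lemma tendsto_Ppot_atBot {η : Measure ℝ} (hη : MemM η) : Tendsto (Ppot η) atBot (𝓝 0) := by
  have h : Tendsto (fun k => ∫ x, max (k - x) 0 ∂η) atBot (𝓝 (∫ _, (0 : ℝ) ∂η)) := by
    refine tendsto_integral_filter_of_dominated_convergence (fun x => |x|)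
      (Eventually.of_forall fun k => (hη.integrable_put k).aestronglyMeasurable)
      ((eventually_le_atBot 0).mono fun k hk => Eventually.of_forall fun x => ?_) hη.2.abs
      (Eventually.of_forall fun x => tendsto_const_nhds.congr' <|
        (eventually_le_atBot x).mono fun k hk => (max_eq_right (sub_nonpos.2 hk)).symm)
    rw [Real.norm_eq_abs, abs_of_nonneg (le_max_right _ _)]
    exact max_le (by linarith [neg_abs_le x]) (abs_nonneg x)
  rwa [integral_zero] at h

lemma convexOn_put (k : ℝ) : ConvexOn ℝ univ fun x : ℝ => max (k - x) 0 :=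
  ((convexOn_const k convex_univ).sub (concaveOn_id convex_univ)).sup
    (convexOn_const 0 convex_univ)

lemma antitone_put (k : ℝ) : Antitone fun x : ℝ => max (k - x) 0 := fun _ _ h =>
  max_le_max (by linarith) le_rfl

lemma continuous_Ppot {η : Measure ℝ} (hη : MemM η) : Continuous (Ppot η) := by
  have := hη.1
  refine (LipschitzWith.of_dist_le_mul (K := (η.real univ).toNNReal) fun k l => ?_).continuous
  rw [Real.dist_eq, Real.dist_eq, Ppot, Ppot,
    ← integral_sub (hη.integrable_put k) (hη.integrable_put l), ← Real.norm_eq_abs,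
    Real.coe_toNNReal _ measureReal_nonneg, mul_comm]
  refine norm_integral_le_of_norm_le_const (Eventually.of_forall fun x => ?_)
  have := abs_max_sub_max_le_abs (k - x) (l - x) 0
  rwa [sub_sub_sub_cancel_right] at this

lemma LeCD.Ppot_le {η χ : Measure ℝ} (hη : MemM η) (hχ : MemM χ) (h : LeCD η χ) (k : ℝ) :
    Ppot η k ≤ Ppot χ k :=
  h _ (convexOn_put k) (antitone_put k) (hη.integrable_put k) (hχ.integrable_put k)

lemma LeCD.integral_id_le {η χ : Measure ℝ} (hη : MemM η) (hχ : MemM χ) (h : LeCD η χ) :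
    ∫ x, x ∂χ ≤ ∫ x, x ∂η := by
  have := h (fun x => -x) (concaveOn_id convex_univ).neg (fun _ _ h => neg_le_neg h) hη.2.neg hχ.2.neg
  rw [integral_neg, integral_neg] at this
  linarith

lemma LeCD.real_univ_eq {η χ : Measure ℝ} (hη : MemM η) (hχ : MemM χ) (h : LeCD η χ) :
    η.real univ = χ.real univ := by
  have := hη.1
  have := hχ.1
  have h1 := h (fun _ => 1) (convexOn_const 1 convex_univ) antitone_const (integrable_const _)
    (integrable_const _)
  have h2 := h (fun _ => -1) (convexOn_const _ convex_univ) antitone_const (integrable_const _)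
    (integrable_const _)
  simp only [integral_const, smul_eq_mul] at h1 h2
  linarith

/-- `S` with the fraction `a` of its mass on `A` removed, and the fraction `b` of the mass of `T`
on `B` added. -/
def exchange (S T : Measure ℝ) (A B : Set ℝ) (a b : ℝ) : Measure ℝ :=
  S.restrict Aᶜ + (1 - a).toNNReal • S.restrict A + b.toNNReal • T.restrict B

lemma memM_exchange {S T : Measure ℝ} (hS : MemM S) (hT : MemM T) (A B : Set ℝ) (a b : ℝ) :
    MemM (exchange S T A B a b) := by
  have := hS.1
  have := hT.1
  refine ⟨by unfold exchange; infer_instance, ?_⟩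
  exact (hS.2.restrict.add_measure (hS.2.restrict.smul_measure_nnreal)).add_measure
    hT.2.restrict.smul_measure_nnreal

lemma integral_exchange {S T : Measure ℝ} {A : Set ℝ} (B : Set ℝ) (hA : MeasurableSet A)
    {a b : ℝ} (ha : a ≤ 1) (hb : 0 ≤ b) {g : ℝ → ℝ} (hgS : Integrable g S) (hgT : Integrable g T) :
    ∫ x, g x ∂(exchange S T A B a b) =
      ∫ x, g x ∂S - a * ∫ x in A, g x ∂S + b * ∫ x in B, g x ∂T := by
  rw [exchange, integral_add_measure (hgS.restrict.add_measure hgS.restrict.smul_measure_nnreal)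
    hgT.restrict.smul_measure_nnreal, integral_add_measure hgS.restrict
    hgS.restrict.smul_measure_nnreal, integral_smul_nnreal_measure, integral_smul_nnreal_measure,
    NNReal.smul_def, NNReal.smul_def, Real.coe_toNNReal _ (by linarith), Real.coe_toNNReal _ hb,
    ← integral_add_compl hA hgS, smul_eq_mul, smul_eq_mul]
  ring

lemma exchange_le {S T : Measure ℝ} {A : Set ℝ} (B : Set ℝ) (hA : MeasurableSet A)
    {a b : ℝ} (ha : 0 ≤ a) (hb : b ≤ 1) : exchange S T A B a b ≤ S + T := by
  have hsmul : ∀ (c : ℝ) (ξ : Measure ℝ), c ≤ 1 → c.toNNReal • ξ ≤ ξ := fun c ξ hc => by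
    have h : (c.toNNReal : ℝ≥0∞) ≤ 1 := by
      exact_mod_cast Real.toNNReal_le_one.2 hc
    refine Measure.le_iff'.2 fun E => ?_
    calc (c.toNNReal • ξ) E = (c.toNNReal : ℝ≥0∞) * ξ E := rfl
      _ ≤ 1 * ξ E := by gcongr
      _ = ξ E := one_mul _
  calc exchange S T A B a b ≤ S.restrict Aᶜ + S.restrict A + T :=
        add_le_add (add_le_add le_rfl (hsmul _ _ (by linarith)))
          ((hsmul _ _ hb).trans Measure.restrict_le_self)
    _ = S + T := by rw [Measure.restrict_compl_add_restrict hA]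

/-- A shadow cannot be improved by moving some of its mass to the right. -/
lemma IsShadow.not_improvable {m S T : Measure ℝ} (hm : MemM m) (hT : MemM T)
    (hS : IsShadow m (S + T) S) {x₀ κ C : ℝ} {A : Set ℝ} (hA : MeasurableSet A)
    (hAx : A ⊆ Iio x₀) (hSA : S A ≠ 0) (hTB : T (Ici x₀) ≠ 0) (hκ : 0 < κ) (hC : 0 ≤ C)
    (hright : ∀ k, x₀ ≤ k → κ ≤ Ppot S k - Ppot m k)
    (hleft : ∀ k, k ≤ x₀ → Ppot (S.restrict A) k ≤ C * (Ppot S k - Ppot m k)) : False := by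
  obtain ⟨hSM, hle, -, hmin⟩ := hS
  have := hm.1
  have := hSM.1
  have := hT.1
  set s := S.real A with hs
  set r := T.real (Ici x₀) with hr
  have hs0 : 0 < s := ENNReal.toReal_pos hSA (measure_ne_top _ _)
  have hr0 : 0 < r := ENNReal.toReal_pos hTB (measure_ne_top _ _)
  set M := s * ∫ x in Ici x₀, x ∂T - r * ∫ x in A, x ∂S with hM
  have hτ : r * x₀ ≤ ∫ x in Ici x₀, x ∂T := by
    have h := setIntegral_mono_on (integrable_const x₀).integrableOn hT.2.integrableOn
      measurableSet_Ici fun x (hx : x₀ ≤ x) => hx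
    rwa [setIntegral_const, smul_eq_mul] at h
  have hρ : ∫ x in A, x ∂S < s * x₀ := by
    have hpos : 0 < ∫ x in A, (x₀ - x) ∂S := by
      rw [setIntegral_pos_iff_support_of_nonneg_ae]
      · have : Function.support (fun x => x₀ - x) ∩ A = A :=
          inter_eq_right.2 fun x hx => (sub_pos.2 (hAx hx)).ne'
        rw [this]; exact pos_iff_ne_zero.2 hSA
      · exact (ae_restrict_iff' hA).2 (Eventually.of_forall fun x hx => (sub_pos.2 (hAx hx)).le)
      · exact ((integrable_const _).sub hSM.2).integrableOn
    rw [integral_sub (integrable_const _) hSM.2.restrict, setIntegral_const, smul_eq_mul] at hpos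
    linarith
  have hM0 : 0 < M := by nlinarith
  obtain ⟨t, ht0, htr, hts, htC, htM⟩ : ∃ t : ℝ, 0 < t ∧ t * r ≤ 1 ∧ t * s ≤ 1 ∧
      t * r * C ≤ 1 ∧ t * M ≤ κ := by
    have hrC : 0 ≤ r * C := by positivity
    have hMκ : 0 < M / κ := by positivity
    have hq : 0 < 1 + r + s + r * C + M / κ := by positivity
    refine ⟨(1 + r + s + r * C + M / κ)⁻¹, by positivity, ?_, ?_, ?_, ?_⟩
    · rw [inv_mul_le_iff₀ hq]; linarith
    · rw [inv_mul_le_iff₀ hq]; linarith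
    · rw [mul_assoc, inv_mul_le_iff₀ hq]; linarith
    · rw [inv_mul_le_iff₀ hq]
      have : M / κ * κ = M := div_mul_cancel₀ _ hκ.ne'
      nlinarith
  set S' := exchange S T A (Ici x₀) (t * r) (t * s) with hS'
  have hS'M : MemM S' := memM_exchange hSM hT _ _ _ _
  have hint : ∀ g : ℝ → ℝ, Integrable g S → Integrable g T → ∫ x, g x ∂S' =
      ∫ x, g x ∂S - t * r * ∫ x in A, g x ∂S + t * s * ∫ x in Ici x₀, g x ∂T :=
    fun g => integral_exchange _ hA htr (by positivity)
  have hmass : m.real univ = S'.real univ := by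
    have := hS'M.1
    have h1 := hint (fun _ => 1) (integrable_const _) (integrable_const _)
    simp only [integral_const, smul_eq_mul, mul_one, measureReal_restrict_apply_univ] at h1
    rw [h1, hle.real_univ_eq hm hSM]
    ring
  have hP : ∀ k, Ppot m k ≤ Ppot S' k := by
    intro k
    have h1 : Ppot S' k = Ppot S k - t * r * Ppot (S.restrict A) k +
        t * s * Ppot (T.restrict (Ici x₀)) k :=
      hint _ (hSM.integrable_put k) (hT.integrable_put k)
    rw [h1]
    rcases le_total k x₀ with hk | hk
    · have h2 := mul_le_mul_of_nonneg_left (hleft k hk) (by positivity : 0 ≤ t * r)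
      have h3 : 0 ≤ t * s * Ppot (T.restrict (Ici x₀)) k :=
        mul_nonneg (by positivity) (Ppot_nonneg _ _)
      have h4 := hle.Ppot_le hm hSM k
      nlinarith
    · have h2 : Ppot (S.restrict A) k = s * k - ∫ x in A, x ∂S := by
        have : Ppot (S.restrict A) k = ∫ x in A, (k - x) ∂S :=
          setIntegral_congr_fun hA fun x hx => max_eq_left (sub_nonneg.2 ((hAx hx).le.trans hk))
        rw [this, integral_sub (integrable_const _) hSM.2.restrict, setIntegral_const, smul_eq_mul]
      have h3 : r * k - ∫ x in Ici x₀, x ∂T ≤ Ppot (T.restrict (Ici x₀)) k := by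
        have : ∫ x in Ici x₀, (k - x) ∂T ≤ Ppot (T.restrict (Ici x₀)) k :=
          integral_mono ((integrable_const _).sub hT.2.restrict) (hT.integrable_put k).restrict
            fun x => le_max_left _ _
        rwa [integral_sub (integrable_const _) hT.2.restrict, setIntegral_const, smul_eq_mul] at this
      have h4 := hright k hk
      have h5 := mul_le_mul_of_nonneg_left h3 (by positivity : 0 ≤ t * s)
      rw [h2]
      nlinarith
  have hS'le := hmin S' hS'M (leCD_of_Ppot_le hm hS'M hmass hP) fun E _ =>
    exchange_le (Ici x₀) hA (by positivity) hts E
  have h1 := hS'le.integral_id_le hSM hS'M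
  rw [hint _ hSM.2 hT.2] at h1
  have h2 : 0 < t * M := by positivity
  rw [hM] at h2
  linarith

lemma exists_measure_inter_Ici_ne_zero {η : Measure ℝ} {E : Set ℝ} {a : ℝ} (hE : E ⊆ Ioi a)
    (h : η E ≠ 0) : ∃ b, a < b ∧ η (E ∩ Ici b) ≠ 0 := by
  by_contra! hcon
  refine h (measure_mono_null (t := ⋃ n : ℕ, E ∩ Ici (a + 1 / ((n : ℝ) + 1))) (fun x hx => ?_)
    (measure_iUnion_null fun n => hcon _ (lt_add_of_pos_right a Nat.one_div_pos_of_nat)))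
  obtain ⟨n, hn⟩ := exists_nat_one_div_lt (show 0 < x - a from sub_pos.2 (hE hx))
  exact mem_iUnion.2 ⟨n, hx, by simp only [mem_Ici]; linarith⟩

lemma exists_measure_Ico_ne_zero {η : Measure ℝ} {x₀ : ℝ} (h : η (Iio x₀) ≠ 0) :
    ∃ b, η (Ico b x₀) ≠ 0 := by
  by_contra! hcon
  refine h (measure_mono_null (t := ⋃ n : ℕ, Ico (-(n : ℝ)) x₀) (fun x hx => ?_)
    (measure_iUnion_null fun n => hcon _))
  obtain ⟨n, hn⟩ := exists_nat_ge (-x)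
  exact mem_iUnion.2 ⟨n, by linarith, hx⟩

lemma exists_measure_Ici_ne_zero_of_Cpot_pos {η : Measure ℝ} {a : ℝ} (h : 0 < Cpot η a) :
    ∃ b, a < b ∧ η (Ici b) ≠ 0 := by
  have h0 : η (Ioi a) ≠ 0 := fun h0 => by
    refine h.ne' (integral_eq_zero_of_ae ?_)
    have h1 : ∀ᵐ x ∂η, x ∉ Ioi a := measure_eq_zero_iff_ae_notMem.1 h0
    filter_upwards [h1] with x hx
    exact max_eq_right (sub_nonpos.2 (not_lt.1 hx))
  obtain ⟨b, hb, hb'⟩ := exists_measure_inter_Ici_ne_zero subset_rfl h0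
  exact ⟨b, hb, fun h => hb' (measure_mono_null inter_subset_right h)⟩

lemma measure_Iio_le_of_forall_lt {η : Measure ℝ} {a : ℝ} {c : ℝ≥0∞}
    (h : ∀ z < a, η (Iio z) ≤ c) : η (Iio a) ≤ c := by
  have hU : Iio a = ⋃ n : ℕ, Iio (a - 1 / ((n : ℝ) + 1)) := by
    refine subset_antisymm (fun x hx => ?_) (iUnion_subset fun n => Iio_subset_Iio ?_)
    · obtain ⟨n, hn⟩ := exists_nat_one_div_lt (show 0 < a - x from sub_pos.2 hx)
      exact mem_iUnion.2 ⟨n, by simp only [mem_Iio]; linarith⟩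
    · exact sub_le_self _ Nat.one_div_pos_of_nat.le
  have hmono : Monotone fun n : ℕ => Iio (a - 1 / ((n : ℝ) + 1)) := fun i j hij =>
    Iio_subset_Iio (sub_le_sub_left (Nat.one_div_le_one_div hij) a)
  rw [hU, hmono.measure_iUnion]
  exact iSup_le fun n => h _ (sub_lt_self _ Nat.one_div_pos_of_nat)

lemma Ppot_mono {η : Measure ℝ} (hη : MemM η) : Monotone (Ppot η) := fun k l hkl =>
  integral_mono (hη.integrable_put k) (hη.integrable_put l) fun x =>
    max_le_max (by linarith) le_rfl

lemma Ppot_restrict_le {η : Measure ℝ} (hη : MemM η) (A : Set ℝ) (k : ℝ) :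
    Ppot (η.restrict A) k ≤ Ppot η k :=
  setIntegral_le_integral (hη.integrable_put k) (Eventually.of_forall fun _ => le_max_right _ _)

lemma Ppot_restrict_Ico_le {η : Measure ℝ} (hη : MemM η) {a x₀ k : ℝ} (hk : a ≤ k) :
    Ppot (η.restrict (Ico a x₀)) k ≤ η.real (Ico a x₀) * (k - a) := by
  have := hη.1
  have h : Ppot (η.restrict (Ico a x₀)) k ≤ ∫ _ in Ico a x₀, (k - a) ∂η :=
    setIntegral_mono_on (hη.integrable_put k).integrableOn (integrable_const _).integrableOn
      measurableSet_Ico fun x hx => max_le (by linarith [hx.1]) (by linarith)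
  rwa [setIntegral_const, smul_eq_mul] at h

lemma Ppot_restrict_Ico_eq_zero {η : Measure ℝ} {a x₀ k : ℝ} (hk : k ≤ a) :
    Ppot (η.restrict (Ico a x₀)) k = 0 :=
  setIntegral_eq_zero_of_forall_eq_zero fun _ hx => max_eq_right (by linarith [hx.1])

lemma integral_put_add_indicator {η : Measure ℝ} (hη : MemM η) (a c : ℝ) :
    Integrable (fun x => max (a - x) 0 + (Iio a).indicator (fun _ => c) x) η ∧
    ∫ x, (max (a - x) 0 + (Iio a).indicator (fun _ => c) x) ∂η =
      Ppot η a + η.real (Iio a) * c := by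
  have := hη.1
  have hi : Integrable ((Iio a).indicator fun _ => c) η :=
    (integrable_const c).indicator measurableSet_Iio
  refine ⟨(hη.integrable_put a).add hi, ?_⟩
  rw [integral_add (hη.integrable_put a) hi, integral_indicator_const _ measurableSet_Iio,
    smul_eq_mul, Ppot]

/-- The mass on `(-∞, a)` is a subgradient of the put potential at `a`. -/
lemma Ppot_subgradient {η : Measure ℝ} (hη : MemM η) (a k : ℝ) :
    Ppot η a + η.real (Iio a) * (k - a) ≤ Ppot η k := by
  obtain ⟨h1, h2⟩ := integral_put_add_indicator hη a (k - a)
  rw [← h2]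
  refine integral_mono h1 (hη.integrable_put k) fun x => ?_
  by_cases hx : x < a
  · simp only [indicator_of_mem (mem_Iio.2 hx), max_eq_left (sub_nonneg.2 hx.le)]
    exact le_trans (by linarith) (le_max_left _ _)
  · simp only [indicator_of_notMem (notMem_Iio.2 (not_lt.1 hx)),
      max_eq_right (sub_nonpos.2 (not_lt.1 hx)), add_zero]
    exact le_max_right _ _

lemma Ppot_le_of_measure_Ico_eq_zero {η : Measure ℝ} (hη : MemM η) {a x₀ : ℝ} (hax : a ≤ x₀)
    (h : η (Ico a x₀) = 0) : Ppot η x₀ ≤ Ppot η a + η.real (Iio a) * (x₀ - a) := by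
  obtain ⟨h1, h2⟩ := integral_put_add_indicator hη a (x₀ - a)
  rw [← h2]
  refine integral_mono_ae (hη.integrable_put x₀) h1 ?_
  have h3 : ∀ᵐ x ∂η, x ∉ Ico a x₀ := measure_eq_zero_iff_ae_notMem.1 h
  filter_upwards [h3] with x hx
  by_cases hxa : x < a
  · simp only [indicator_of_mem (mem_Iio.2 hxa), max_eq_left (sub_nonneg.2 hxa.le)]
    exact max_le (by linarith) (by linarith)
  · have hx0 : x₀ ≤ x := not_lt.1 fun h' => hx ⟨not_lt.1 hxa, h'⟩
    simp only [indicator_of_notMem (notMem_Iio.2 (not_lt.1 hxa)), add_zero]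
    rw [max_eq_right (by linarith)]
    exact le_max_right _ _

lemma integral_put_chord {η : Measure ℝ} (hη : MemM η) (a b c d : ℝ) :
    Integrable (fun x => c * max (a - x) 0 + d * max (b - x) 0) η ∧
    ∫ x, (c * max (a - x) 0 + d * max (b - x) 0) ∂η = c * Ppot η a + d * Ppot η b := by
  refine ⟨((hη.integrable_put a).const_mul c).add ((hη.integrable_put b).const_mul d), ?_⟩
  rw [integral_add ((hη.integrable_put a).const_mul c) ((hη.integrable_put b).const_mul d),
    integral_const_mul, integral_const_mul, Ppot, Ppot]

lemma Ppot_chord_le {η : Measure ℝ} (hη : MemM η) {a k b : ℝ} (hak : a ≤ k) (hkb : k ≤ b) :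
    (b - a) * Ppot η k ≤ (b - k) * Ppot η a + (k - a) * Ppot η b := by
  obtain ⟨h1, h2⟩ := integral_put_chord hη a b (b - k) (k - a)
  rw [← h2, Ppot, ← integral_const_mul]
  refine integral_mono ((hη.integrable_put k).const_mul _) h1 fun x => ?_
  have ha := mul_le_mul_of_nonneg_left (le_max_left (a - x) 0) (sub_nonneg.2 hkb)
  have hb := mul_le_mul_of_nonneg_left (le_max_left (b - x) 0) (sub_nonneg.2 hak)
  have ha' := mul_nonneg (sub_nonneg.2 hkb) (le_max_right (a - x) 0)
  have hb' := mul_nonneg (sub_nonneg.2 hak) (le_max_right (b - x) 0)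
  simp only
  rcases max_cases (k - x) 0 with ⟨h, -⟩ | ⟨h, -⟩ <;> rw [h] <;> nlinarith

lemma Ppot_chord_ge_of_measure_Ioo_eq_zero {η : Measure ℝ} (hη : MemM η) {a k b : ℝ}
    (hak : a ≤ k) (hkb : k ≤ b) (h : η (Ioo a b) = 0) :
    (b - k) * Ppot η a + (k - a) * Ppot η b ≤ (b - a) * Ppot η k := by
  obtain ⟨h1, h2⟩ := integral_put_chord hη a b (b - k) (k - a)
  rw [← h2, Ppot, ← integral_const_mul]
  refine integral_mono_ae h1 ((hη.integrable_put k).const_mul _) ?_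
  have h3 : ∀ᵐ x ∂η, x ∉ Ioo a b := measure_eq_zero_iff_ae_notMem.1 h
  filter_upwards [h3] with x hx
  rcases le_or_gt x a with hxa | hxa
  · rw [max_eq_left (by linarith), max_eq_left (by linarith), max_eq_left (by linarith)]
    exact le_of_eq (by ring)
  · have hxb : b ≤ x := not_lt.1 fun h' => hx ⟨hxa, h'⟩
    rw [max_eq_right (by linarith), max_eq_right (by linarith), max_eq_right (by linarith)]
    simp

/-- If the put potentials touch at `a` with `P_m ≤ P_S`, the left slopes there are ordered. -/
lemma measure_Iio_le_of_Ppot_eq {m S : Measure ℝ} (hm : MemM m) (hS : MemM S)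
    (h : ∀ k, Ppot m k ≤ Ppot S k) {a : ℝ} (ha : Ppot S a = Ppot m a) :
    S (Iio a) ≤ m (Iio a) := by
  have := hm.1
  have := hS.1
  refine measure_Iio_le_of_forall_lt fun z hz => ?_
  have h1 := Ppot_subgradient hm a z
  have h2 := Ppot_subgradient hS z a
  have h3 := h z
  have h4 : S.real (Iio z) * (a - z) ≤ m.real (Iio a) * (a - z) := by linarith
  have h5 := le_of_mul_le_mul_right h4 (sub_pos.2 hz)
  exact (ENNReal.toReal_le_toReal (measure_ne_top _ _) (measure_ne_top _ _)).1 h5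

lemma exists_pos_le_Ppot_sub {m S : Measure ℝ} (hm : MemM m) (hS : MemM S) {d : ℝ} (hd : 0 < d)
    (hD : ∀ k, Ppot S k - Ppot m k = d - Cpot m k + Cpot S k) {a : ℝ}
    (ha : ∀ k, a ≤ k → 0 < Ppot S k - Ppot m k) :
    ∃ κ, 0 < κ ∧ ∀ k, a ≤ k → κ ≤ Ppot S k - Ppot m k := by
  obtain ⟨B, hB⟩ := eventually_atTop.1
    ((tendsto_Cpot_atTop hm).eventually (gt_mem_nhds (half_pos hd)))
  have hcont : Continuous fun k => Ppot S k - Ppot m k :=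
    (continuous_Ppot hS).sub (continuous_Ppot hm)
  obtain ⟨x, hx, hmin⟩ := isCompact_Icc.exists_isMinOn
    (nonempty_Icc.2 (le_max_left a B)) hcont.continuousOn
  refine ⟨min (Ppot S x - Ppot m x) (d / 2), lt_min (ha x hx.1) (half_pos hd), fun k hk => ?_⟩
  rcases le_total k (max a B) with h | h
  · exact (min_le_left _ _).trans (hmin ⟨hk, h⟩)
  · have h1 := hB k ((le_max_right _ _).trans h)
    have h2 := Cpot_nonneg S k
    exact (min_le_right _ _).trans (by rw [hD]; linarith)

lemma IsShadow.false_of_gap {m S T : Measure ℝ} (hm : MemM m) (hT : MemM T)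
    (hS : IsShadow m (S + T) S) {δ : ℝ} (hδ : 0 < δ) (hd : 0 < ∫ x, x ∂m - ∫ x, x ∂S)
    (hgap : ∀ k, Cpot m k - Cpot (S + T) k + δ ≤ ∫ x, x ∂m - ∫ x, x ∂S) : False := by
  have hSM := hS.1
  have hle := hS.2.1
  have := hm.1
  have := hSM.1
  set d := ∫ x, x ∂m - ∫ x, x ∂S with hd_def
  have hP : ∀ k, Ppot m k ≤ Ppot S k := hle.Ppot_le hm hSM
  have hD : ∀ k, Ppot S k - Ppot m k = d - Cpot m k + Cpot S k := fun k => by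
    rw [Cpot_eq hm, Cpot_eq hSM, hle.real_univ_eq hm hSM]
    ring
  have hDT : ∀ k, δ ≤ Ppot S k - Ppot m k + Cpot T k := fun k => by
    have h1 := hgap k
    rw [Cpot_add hSM hT] at h1
    rw [hD]
    linarith
  have shift : ∀ b x₀, S (Ico b x₀) ≠ 0 → T (Ici x₀) ≠ 0 →
      (∀ k, b ≤ k → 0 < Ppot S k - Ppot m k) → False := by
    intro b x₀ hSA hTB hpos
    obtain ⟨κ, hκ, hκD⟩ := exists_pos_le_Ppot_sub hm hSM hd hD hpos
    have hbx : b < x₀ := nonempty_Ico.1 (nonempty_of_measure_ne_zero hSA)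
    have hC : 0 ≤ Ppot S x₀ / κ := div_nonneg (Ppot_nonneg _ _) hκ.le
    refine hS.not_improvable hm hT measurableSet_Ico (fun x hx => hx.2) hSA hTB hκ hC
      (fun k hk => hκD k (hbx.le.trans hk)) fun k hk => ?_
    rcases le_total k b with hkb | hkb
    · rw [Ppot_restrict_Ico_eq_zero hkb]
      exact mul_nonneg hC (sub_nonneg.2 (hP k))
    · calc Ppot (S.restrict (Ico b x₀)) k ≤ Ppot S k := Ppot_restrict_le hSM _ _
        _ ≤ Ppot S x₀ := Ppot_mono hSM hk
        _ = Ppot S x₀ / κ * κ := (div_mul_cancel₀ _ hκ.ne').symm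
        _ ≤ _ := mul_le_mul_of_nonneg_left (hκD k hkb) hC
  by_cases hZ : ∃ k, Ppot S k - Ppot m k = 0
  · have hbdd : BddAbove {k | Ppot S k - Ppot m k = 0} := by
      obtain ⟨B, hB⟩ := eventually_atTop.1 ((tendsto_Cpot_atTop hm).eventually (gt_mem_nhds hd))
      refine ⟨B, fun k (hk : _ = 0) => not_lt.1 fun hBk => ?_⟩
      have h1 := hB k hBk.le
      have h2 := Cpot_nonneg S k
      rw [hD] at hk
      linarith
    have hclosed : IsClosed {k | Ppot S k - Ppot m k = 0} :=
      isClosed_eq ((continuous_Ppot hSM).sub (continuous_Ppot hm)) continuous_const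
    have ha : Ppot S _ - Ppot m _ = 0 := hclosed.csSup_mem hZ hbdd
    set a := sSup {k | Ppot S k - Ppot m k = 0} with ha_def
    have hpos : ∀ k, a < k → 0 < Ppot S k - Ppot m k := fun k hk =>
      lt_of_le_of_ne (sub_nonneg.2 (hP k)) fun h0 => not_lt.2 (le_csSup hbdd h0.symm) hk
    obtain ⟨x₀, hax, hTB⟩ : ∃ b, a < b ∧ T (Ici b) ≠ 0 :=
      exists_measure_Ici_ne_zero_of_Cpot_pos (by linarith [hDT a])
    by_cases hS0 : S (Ioo a x₀) = 0
    · have hx₀ := hpos x₀ hax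
      have hSA : S (Ico a x₀) ≠ 0 := fun h0 => by
        have h1 := Ppot_le_of_measure_Ico_eq_zero hSM hax.le h0
        have h2 := Ppot_subgradient hm a x₀
        have h3 : S.real (Iio a) ≤ m.real (Iio a) := ENNReal.toReal_mono (measure_ne_top _ _)
          (measure_Iio_le_of_Ppot_eq hm hSM hP (sub_eq_zero.1 ha))
        have h4 := mul_le_mul_of_nonneg_right h3 (sub_nonneg.2 hax.le)
        linarith
      obtain ⟨κ, hκ, hκD⟩ := exists_pos_le_Ppot_sub hm hSM hd hD fun k hk => hpos k (hax.trans_le hk)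
      set D₀ := Ppot S x₀ - Ppot m x₀ with hD₀
      have hC : 0 ≤ S.real (Ico a x₀) * (x₀ - a) / D₀ :=
        div_nonneg (mul_nonneg measureReal_nonneg (sub_nonneg.2 hax.le)) hx₀.le
      refine hS.not_improvable hm hT measurableSet_Ico (fun x hx => hx.2) hSA hTB hκ hC
        hκD fun k hk => ?_
      rcases le_total k a with hka | hka
      · rw [Ppot_restrict_Ico_eq_zero hka]
        exact mul_nonneg hC (sub_nonneg.2 (hP k))
      · refine (Ppot_restrict_Ico_le hSM hka).trans ?_
        have h1 := Ppot_chord_le hm hka hk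
        have h2 := Ppot_chord_ge_of_measure_Ioo_eq_zero hSM hka hk hS0
        have h3 : (k - a) * D₀ ≤ (x₀ - a) * (Ppot S k - Ppot m k) := by
          rw [sub_eq_zero.1 ha] at h2
          linarith
        rw [div_mul_eq_mul_div, le_div_iff₀ hx₀, mul_assoc, mul_assoc]
        exact mul_le_mul_of_nonneg_left h3 measureReal_nonneg
    · obtain ⟨b, hab, hb⟩ := exists_measure_inter_Ici_ne_zero Ioo_subset_Ioi_self hS0
      have hsub : Ioo a x₀ ∩ Ici b ⊆ Ico b x₀ := fun x hx => ⟨hx.2, hx.1.2⟩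
      exact shift b x₀ (fun h0 => hb (measure_mono_null hsub h0)) hTB
        fun k hk => hpos k (hab.trans_le hk)
  · have hpos : ∀ k, 0 < Ppot S k - Ppot m k := fun k =>
      lt_of_le_of_ne (sub_nonneg.2 (hP k)) fun h0 => hZ ⟨k, h0.symm⟩
    obtain ⟨k₀, hk₀⟩ := ((tendsto_Ppot_atBot hSM).eventually (gt_mem_nhds hδ)).exists
    obtain ⟨x₀, -, hTB⟩ : ∃ b, k₀ < b ∧ T (Ici b) ≠ 0 :=
      exists_measure_Ici_ne_zero_of_Cpot_pos (by linarith [hDT k₀, Ppot_nonneg m k₀])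
    have hSx : S (Iio x₀) ≠ 0 := fun h0 => by
      have h1 : Ppot S x₀ = 0 := by
        refine integral_eq_zero_of_ae ?_
        have h2 : ∀ᵐ x ∂S, x ∉ Iio x₀ := measure_eq_zero_iff_ae_notMem.1 h0
        filter_upwards [h2] with x hx
        exact max_eq_right (sub_nonpos.2 (not_lt.1 hx))
      linarith [hpos x₀, Ppot_nonneg m x₀]
    obtain ⟨b, hb⟩ := exists_measure_Ico_ne_zero hSx
    exact shift b x₀ hb hTB fun k _ => hpos k

/-- The formula for the mean of a shadow, for arbitrary measures with finite first moment. -/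
theorem IsShadow.iSup_Cpot_sub {m ν S : Measure ℝ} (hm : MemM m) (hν : MemM ν)
    (hS : IsShadow m ν S) :
    (⨆ k : ℝ, (Cpot m k - Cpot ν k)) = (∫ x, x ∂m) - ∫ x, x ∂S := by
  have hSM := hS.1
  have hle := hS.2.1
  have := hSM.1
  have := hν.1
  have hSν : S ≤ ν := Measure.le_iff.2 hS.2.2.1
  obtain ⟨T, hT, rfl⟩ : ∃ T, MemM T ∧ ν = S + T :=
    ⟨ν - S, ⟨inferInstance, hν.2.mono_measure Measure.sub_le⟩,
      by rw [add_comm, Measure.sub_add_cancel_of_le hSν]⟩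
  have hub : ∀ k, Cpot m k - Cpot (S + T) k ≤ (∫ x, x ∂m) - ∫ x, x ∂S := fun k => by
    have h1 := hle.Ppot_le hm hSM k
    have h2 := Cpot_nonneg T k
    rw [Cpot_add hSM hT, Cpot_eq hm, Cpot_eq hSM, hle.real_univ_eq hm hSM]
    linarith
  refine le_antisymm (ciSup_le hub) (not_lt.1 fun hlt => ?_)
  have hbdd : BddAbove (range fun k => Cpot m k - Cpot (S + T) k) :=
    ⟨_, forall_mem_range.2 hub⟩
  set c := ⨆ k : ℝ, (Cpot m k - Cpot (S + T) k) with hc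
  have hle_c : ∀ k, Cpot m k - Cpot (S + T) k ≤ c := fun k => le_ciSup hbdd k
  have hc0 : 0 ≤ c := by
    have h := (tendsto_Cpot_atTop hm).sub (tendsto_Cpot_atTop hν)
    rw [sub_zero] at h
    exact le_of_tendsto h (Eventually.of_forall hle_c)
  exact hS.false_of_gap hm hT (sub_pos.2 hlt) (hc0.trans_lt hlt) fun k => by linarith [hle_c k]

lemma memM_muU {μ : Measure ℝ} (hμ : MemM μ) (u : ℝ) : MemM (muU μ u) := by
  have := hμ.1
  unfold muU
  split_ifs
  · exact ⟨inferInstance, integrable_zero_measure⟩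
  · exact hμ
  · refine ⟨?_, hμ.2.restrict.add_measure
      ((integrable_dirac (by simp)).smul_measure ENNReal.ofReal_ne_top)⟩
    have := Measure.smul_finite (Measure.dirac (quantile μ u))
      (c := ENNReal.ofReal (u - (μ (Iio (quantile μ u))).toReal)) ENNReal.ofReal_ne_top
    infer_instance

/-- Lemma 4.2: `c(u)` equals the difference of the means of `μ_u` and of its
shadow in `ν`. -/
theorem c_eq_mean_difference
    (μ ν : MeasureTheory.Measure ℝ)
    [MeasureTheory.IsProbabilityMeasure μ] [MeasureTheory.IsProbabilityMeasure ν]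
    (hμ : MeasureTheory.Integrable (fun x : ℝ => x) μ)
    (hν : MeasureTheory.Integrable (fun x : ℝ => x) ν)
    (hcd : LeCD μ ν)
    (u : ℝ) (hu : u ∈ Set.Ioo (0:ℝ) 1)
    (Su : MeasureTheory.Measure ℝ) (hSu : IsShadow (muU μ u) ν Su) :
    (⨆ k : ℝ, (Cpot (muU μ u) k - Cpot ν k)) =
      (∫ x, x ∂(muU μ u)) - ∫ x, x ∂Su := by
  exact hSu.iSup_Cpot_sub (memM_muU ⟨inferInstance, hμ⟩ u) ⟨inferInstance, hν⟩
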